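/- Let S be a separated C-structure with interpretation interp, Rules a rule system over (ι, κ), and GS : κ → Set S, GA : κ → Set P.M corresponding prior interpretations. Let ΦS be the operator induced by Rules relative to interp and GS, and ΦA the operator induced by Rules relative to the canonical structure mkA on P.M and GA. Then for every i : ι and every a ∈ (gfp ΦS) i there exists a hyper-term t such that t is a decomposition of a and t ∈ (gfp ΦA) i. -/

import Mathlib

open PFunctor

/-- The polynomial functor of a constructor vocabulary `C` with arities `arity`.
Hyper-terms over `C` are the elements of `(PF C arity).M`. -/
def PF (C : Type) (arity : C → ℕ) : PFunctor := ⟨C, fun c => Fin (arity c)⟩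

/-- A `C`-structure `interp` on `S` is *separated* if each constructor is interpreted
injectively and distinct constructors have disjoint ranges. -/
def Separated {C : Type} {arity : C → ℕ} {S : Type*}
    (interp : ∀ c : C, (Fin (arity c) → S) → S) : Prop :=
  (∀ c, Function.Injective (interp c)) ∧
    ∀ c d, c ≠ d → Disjoint (Set.range (interp c)) (Set.range (interp d))

/-- A decomposition relation between hyper-terms and elements of a `C`-structure. -/
def IsDecompRel {C : Type} {arity : C → ℕ} {S : Type*}
    (interp : ∀ c : C, (Fin (arity c) → S) → S)
    (R : (PF C arity).M → S → Prop) : Prop :=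
  ∀ t a, R t a → ∃ (c : C) (f : Fin (arity c) → (PF C arity).M) (b : Fin (arity c) → S),
    t = PFunctor.M.mk ⟨c, f⟩ ∧ a = interp c b ∧ ∀ i, R (f i) (b i)

/-- A hyper-term `t` is a decomposition of `a : S` if `R t a` for some
decomposition relation `R`. -/
def IsDecomposition {C : Type} {arity : C → ℕ} {S : Type*}
    (interp : ∀ c : C, (Fin (arity c) → S) → S)
    (t : (PF C arity).M) (a : S) : Prop :=
  ∃ R, IsDecompRel interp R ∧ R t a

/-- The canonical `C`-structure on hyper-terms. -/
def mkA {C : Type} {arity : C → ℕ} (c : C) (f : Fin (arity c) → (PF C arity).M) :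
    (PF C arity).M :=
  PFunctor.M.mk ⟨c, f⟩

/-- The monotone operator on `ι → Set S` induced by a rule system `Rules` relative to
a `C`-structure `interp` on `S` and prior interpretations `G : κ → Set S`. -/
def ruleOp {C : Type} {arity : C → ℕ} {S : Type*} {ι κ : Type*}
    (interp : ∀ c : C, (Fin (arity c) → S) → S)
    (Rules : Set (Σ _ : ι, Σ c : C, Fin (arity c) → ι ⊕ κ))
    (G : κ → Set S) : (ι → Set S) →o (ι → Set S) where
  toFun X i :=
    {a | ∃ r ∈ Rules, r.1 = i ∧ ∃ b : Fin (arity r.2.1) → S,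
      a = interp r.2.1 b ∧ ∀ j,
        (∀ i', r.2.2 j = Sum.inl i' → b j ∈ X i') ∧
        (∀ k, r.2.2 j = Sum.inr k → b j ∈ G k)}
  monotone' := by
    intro X Y hXY i a ha
    obtain ⟨r, hr, hi, b, hab, hj⟩ := ha
    exact ⟨r, hr, hi, b, hab, fun j =>
      ⟨fun i' h => hXY i' ((hj j).1 i' h), (hj j).2⟩⟩

/-- Prior interpretations `GS` on `S` and `GA` on hyper-terms correspond. -/
def Corresponds {C : Type} {arity : C → ℕ} {S : Type*} {κ : Type*}
    (interp : ∀ c : C, (Fin (arity c) → S) → S)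
    (GS : κ → Set S) (GA : κ → Set (PF C arity).M) : Prop :=
  (∀ k, ∀ a ∈ GS k, ∃ t, IsDecomposition interp t a ∧ t ∈ GA k) ∧
  (∀ k (t : (PF C arity).M) (a : S), t ∈ GA k → IsDecomposition interp t a → a ∈ GS k)

/-!
Unfold `a ∈ gfp ΦS i` corecursively: `a` matches a rule, whose premises are either again elements
of the greatest fixed point, where the unfolding continues, or elements of prior types, where it
stops with a decomposition supplied by the correspondence. Stopping at finished hyper-terms makes
the unfolding an apomorphism. Both claims about the resulting hyper-term then follow by
coinduction.
-/

section Apomorphism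

variable {P : PFunctor} {α : Type*}

/-- The coalgebra on `α ⊕ P.M` that runs `step` on the left summand and destructs finished
trees on the right summand. -/
def apomorphismStep (step : α → P (α ⊕ P.M)) : α ⊕ P.M → P (α ⊕ P.M) :=
  Sum.elim step fun t => P.map Sum.inr t.dest

/-- The apomorphism of `step`: corecursion in which each child is either a state from which to
continue or a finished tree, used as it stands. -/
def apomorphism (step : α → P (α ⊕ P.M)) (x : α) : P.M :=
  M.corec (apomorphismStep step) (Sum.inl x)

theorem corec_apomorphismStep_inr (step : α → P (α ⊕ P.M)) (t : P.M) :
    M.corec (apomorphismStep step) (Sum.inr t) = t := by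
  have corec_inr_eq : (fun t => M.corec (apomorphismStep step) (Sum.inr t)) = M.corec M.dest :=
    M.corec_unique _ _ fun _ => M.dest_corec _ _
  have id_eq : id = M.corec (F := P) M.dest := M.corec_unique _ _ fun _ => rfl
  exact congrFun (corec_inr_eq.trans id_eq.symm) t

theorem apomorphism_eq_mk (step : α → P (α ⊕ P.M)) (x : α) :
    apomorphism step x = M.mk (P.map (Sum.elim (apomorphism step) id) (step x)) := by
  have corec_eq : M.corec (apomorphismStep step) = Sum.elim (apomorphism step) id := by
    funext y
    cases y with
    | inl x => rfl
    | inr t => exact corec_apomorphismStep_inr step t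
  rw [← corec_eq]
  exact M.corec_def _ _

end Apomorphism

section SumElimRec

variable {S β γ ι κ : Type*} {X : ι → Set S} {G : κ → Set S}

/-- A function on the members of a combined family `Sum.elim X G`, given by a function on the
members of each of the two families. -/
def sumElimRec (u : ∀ i, X i → β) (v : ∀ k, G k → β) : ∀ y, ↥(Sum.elim X G y) → β
  | .inl i => u i
  | .inr k => v k

theorem apply_sumElimRec (f : β → γ) (u : ∀ i, X i → β) (v : ∀ k, G k → β) :
    ∀ (y : ι ⊕ κ) (a : ↥(Sum.elim X G y)),
      f (sumElimRec u v y a) = sumElimRec (fun i a => f (u i a)) (fun k a => f (v k a)) y a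
  | .inl _, _ => rfl
  | .inr _, _ => rfl

end SumElimRec

section Decomposition

variable {C : Type} {arity : C → ℕ} {S : Type*} {interp : ∀ c : C, (Fin (arity c) → S) → S}

theorem isDecompRel_isDecomposition : IsDecompRel interp (IsDecomposition interp) := by
  rintro t a ⟨R, hR, hta⟩
  obtain ⟨c, f, b, ht, ha, hfb⟩ := hR t a hta
  exact ⟨c, f, b, ht, ha, fun j => ⟨R, hR, hfb j⟩⟩

theorem isDecomposition_of_decompRel_upTo {R : (PF C arity).M → S → Prop}
    (hR : ∀ t a, R t a → ∃ (c : C) (f : Fin (arity c) → (PF C arity).M) (b : Fin (arity c) → S),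
      t = mkA c f ∧ a = interp c b ∧ ∀ j, R (f j) (b j) ∨ IsDecomposition interp (f j) (b j))
    {t : (PF C arity).M} {a : S} (hta : R t a) : IsDecomposition interp t a := by
  refine ⟨fun t a => R t a ∨ IsDecomposition interp t a, ?_, Or.inl hta⟩
  rintro t a (hta | hta)
  · exact hR t a hta
  · obtain ⟨c, f, b, ht, ha, hfb⟩ := isDecompRel_isDecomposition t a hta
    exact ⟨c, f, b, ht, ha, fun j => Or.inr (hfb j)⟩

end Decomposition

section Rules

variable {C : Type} {arity : C → ℕ} {S ι κ : Type*}
  {interp : ∀ c : C, (Fin (arity c) → S) → S}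
  {Rules : Set (Σ _ : ι, Σ c : C, Fin (arity c) → ι ⊕ κ)}

theorem mem_ruleOp_iff {G : κ → Set S} {X : ι → Set S} {i : ι} {a : S} :
    a ∈ ruleOp interp Rules G X i ↔ ∃ r ∈ Rules, r.1 = i ∧ ∃ b : Fin (arity r.2.1) → S,
      a = interp r.2.1 b ∧ ∀ j, b j ∈ Sum.elim X G (r.2.2 j) := by
  have mem_sumElim_iff (y : ι ⊕ κ) (s : S) : s ∈ Sum.elim X G y ↔
      (∀ i', y = Sum.inl i' → s ∈ X i') ∧ (∀ k, y = Sum.inr k → s ∈ G k) := by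
    cases y <;> simp
  simp only [mem_sumElim_iff]
  rfl

variable {GS : κ → Set S} {X : ι → Set S} {T : ∀ k, GS k → (PF C arity).M}

/-- The hyper-terms `u i a`, for `a ∈ X i`, unfold along `Rules`: some rule for `i` derives `a`
from elements of `X` and `GS`, and `u i a` applies the constructor of that rule to the hyper-terms
assigned to these elements by `u` and `T` respectively. -/
def UnfoldsAlong (interp : ∀ c : C, (Fin (arity c) → S) → S)
    (Rules : Set (Σ _ : ι, Σ c : C, Fin (arity c) → ι ⊕ κ))
    (T : ∀ k, GS k → (PF C arity).M) (u : ∀ i, X i → (PF C arity).M) : Prop :=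
  ∀ i (a : X i), ∃ r ∈ Rules, r.1 = i ∧ ∃ b : ∀ j, ↥(Sum.elim X GS (r.2.2 j)),
    a = interp r.2.1 (fun j => b j) ∧ u i a = mkA r.2.1 fun j => sumElimRec u T (r.2.2 j) (b j)

theorem exists_unfoldsAlong (hX : X ≤ ruleOp interp Rules GS X)
    (T : ∀ k, GS k → (PF C arity).M) :
    ∃ u : ∀ i, X i → (PF C arity).M, UnfoldsAlong interp Rules T u := by
  have rule_of_mem (p : Σ i, X i) : ∃ r ∈ Rules, r.1 = p.1 ∧
      ∃ b : ∀ j, ↥(Sum.elim X GS (r.2.2 j)), p.2 = interp r.2.1 fun j => b j := by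
    obtain ⟨r, hr, hri, b, ha, hb⟩ := mem_ruleOp_iff.mp (hX p.1 p.2.2)
    exact ⟨r, hr, hri, fun j => ⟨b j, hb j⟩, ha⟩
  choose r hr hri b ha using rule_of_mem
  let step (p : Σ i, X i) : PF C arity ((Σ i, X i) ⊕ (PF C arity).M) :=
    ⟨(r p).2.1, fun j => sumElimRec (fun i a => Sum.inl ⟨i, a⟩) (fun k a => Sum.inr (T k a))
      ((r p).2.2 j) (b p j)⟩
  refine ⟨fun i a => apomorphism step ⟨i, a⟩, fun i a =>
    ⟨r ⟨i, a⟩, hr _, hri _, b ⟨i, a⟩, ha ⟨i, a⟩, (apomorphism_eq_mk step ⟨i, a⟩).trans ?_⟩⟩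
  exact congrArg (mkA _) (funext fun j => apply_sumElimRec _ _ _ _ _)

namespace UnfoldsAlong

variable {u : ∀ i, X i → (PF C arity).M}

theorem isDecomposition (hu : UnfoldsAlong interp Rules T u)
    (hT : ∀ k (a : GS k), IsDecomposition interp (T k a) a) (i : ι) (a : X i) :
    IsDecomposition interp (u i a) a := by
  refine isDecomposition_of_decompRel_upTo
    (R := fun t s => ∃ i, ∃ a : X i, t = u i a ∧ s = a.1) ?_ ⟨i, a, rfl, rfl⟩
  rintro _ _ ⟨i, a, rfl, rfl⟩
  obtain ⟨r, -, -, b, ha, hua⟩ := hu i a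
  refine ⟨r.2.1, _, _, hua, ha, fun j => ?_⟩
  have premise : ∀ y (s : ↥(Sum.elim X GS y)),
      (∃ i, ∃ a : X i, sumElimRec u T y s = u i a ∧ s.1 = a.1) ∨
        IsDecomposition interp (sumElimRec u T y s) s
    | .inl i, s => Or.inl ⟨i, s, rfl, rfl⟩
    | .inr k, s => Or.inr (hT k s)
  exact premise _ (b j)

theorem mem_gfp (hu : UnfoldsAlong interp Rules T u) {GA : κ → Set (PF C arity).M}
    (hT : ∀ k (a : GS k), T k a ∈ GA k) (i : ι) (a : X i) :
    u i a ∈ OrderHom.gfp (ruleOp mkA Rules GA) i := by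
  suffices range_le : (fun i => Set.range (u i)) ≤ ruleOp mkA Rules GA fun i => Set.range (u i) from
    OrderHom.le_gfp _ range_le i ⟨a, rfl⟩
  rintro i _ ⟨a, rfl⟩
  obtain ⟨r, hr, hri, b, -, hua⟩ := hu i a
  refine mem_ruleOp_iff.mpr ⟨r, hr, hri, _, hua, fun j => ?_⟩
  have premise : ∀ y (s : ↥(Sum.elim X GS y)),
      sumElimRec u T y s ∈ Sum.elim (fun i => Set.range (u i)) GA y
    | .inl _, s => ⟨s, rfl⟩
    | .inr k, s => hT k s
  exact premise _ (b j)

end UnfoldsAlong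

end Rules

theorem gfp_decomposition_exists_general {C : Type} {arity : C → ℕ} {S ι κ : Type*}
    (interp : ∀ c : C, (Fin (arity c) → S) → S)
    (Rules : Set (Σ _ : ι, Σ c : C, Fin (arity c) → ι ⊕ κ))
    (GS : κ → Set S) (GA : κ → Set (PF C arity).M)
    (hdec : ∀ k, ∀ a ∈ GS k, ∃ t, IsDecomposition interp t a ∧ t ∈ GA k) :
    ∀ i : ι, ∀ a ∈ OrderHom.gfp (ruleOp interp Rules GS) i,
      ∃ t : (PF C arity).M, IsDecomposition interp t a ∧
        t ∈ OrderHom.gfp (ruleOp (mkA (arity := arity)) Rules GA) i := by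
  choose T hTdec hTmem using fun k (a : GS k) => hdec k a a.2
  obtain ⟨u, hu⟩ := exists_unfoldsAlong (OrderHom.map_gfp (ruleOp interp Rules GS)).ge T
  exact fun i a ha => ⟨u i ⟨a, ha⟩, hu.isDecomposition hTdec i ⟨a, ha⟩, hu.mem_gfp hTmem i ⟨a, ha⟩⟩

/-- Coinductive types in a separated `D`-correct structure: every element of the greatest
fixed point has a decomposition lying in the greatest fixed point over hyper-terms. -/
theorem gfp_decomposition_exists {C : Type} [Fintype C] {arity : C → ℕ} {S : Type*}
    {ι κ : Type*}
    (interp : ∀ c : C, (Fin (arity c) → S) → S) (hsep : Separated interp)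
    (Rules : Set (Σ _ : ι, Σ c : C, Fin (arity c) → ι ⊕ κ))
    (GS : κ → Set S) (GA : κ → Set (PF C arity).M)
    (hcorr : Corresponds interp GS GA) :
    ∀ i : ι, ∀ a ∈ OrderHom.gfp (ruleOp interp Rules GS) i,
      ∃ t : (PF C arity).M, IsDecomposition interp t a ∧
        t ∈ OrderHom.gfp (ruleOp (mkA (arity := arity)) Rules GA) i :=
  gfp_decomposition_exists_general interp Rules GS GA hcorr.1
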